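/- Let A be a unital star ring, q ≥ 1, and let U be a q×q matrix with entries in A such that U·U* = U*·U = C·1 for some element C of A (where U* denotes the conjugate-transpose matrix and 1 the identity matrix). Then C commutes with every matrix entry U_{ij} of U and with every adjoint entry (U_{ij})*. -/

import Mathlib

open Matrix

section

variable {A m n : Type*} [Fintype m] [Fintype n] [DecidableEq m] [DecidableEq n]

theorem semiconjBy_apply_of_mul_eq_diagonal [NonUnitalSemiring A]
    {X : Matrix m n A} {Y : Matrix n m A} {c : m → A} {d : n → A}
    (hXY : X * Y = diagonal c) (hYX : Y * X = diagonal d) (i : m) (j : n) :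
    SemiconjBy (X i j) (d j) (c i) :=
  calc
    X i j * d j = (X * diagonal d) i j := (mul_diagonal d X i j).symm
    _ = (diagonal c * X) i j := by rw [← hYX, ← hXY, Matrix.mul_assoc]
    _ = c i * X i j := diagonal_mul c X i j

theorem stmt_0_general [Semiring A] {X : Matrix m n A} {Y : Matrix n m A} {C : A}
    (hXY : X * Y = C • (1 : Matrix m m A)) (hYX : Y * X = C • (1 : Matrix n n A))
    (i : m) (j : n) : Commute C (X i j) ∧ Commute C (Y j i) := by
  rw [smul_one_eq_diagonal] at hXY hYX
  have hX : Commute (X i j) C := semiconjBy_apply_of_mul_eq_diagonal hXY hYX i j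
  have hY : Commute (Y j i) C := semiconjBy_apply_of_mul_eq_diagonal hYX hXY j i
  exact ⟨hX.symm, hY.symm⟩

end

/-- If `U U* = U* U = C • 1` in `M_q(A)` for a unital star ring `A`, then `C`
commutes with every entry of `U` and with every adjoint of an entry of `U`. -/
theorem stmt_0 {A : Type*} [Ring A] [StarRing A] (q : ℕ) (hq : 1 ≤ q)
    (U : Matrix (Fin q) (Fin q) A) (C : A)
    (h1 : U * U.conjTranspose = C • (1 : Matrix (Fin q) (Fin q) A))
    (h2 : U.conjTranspose * U = C • (1 : Matrix (Fin q) (Fin q) A)) :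
    ∀ i j : Fin q, Commute C (U i j) ∧ Commute C (star (U i j)) :=
  stmt_0_general h1 h2
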